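/- Let e : Fin 4 → ℝ⁴ be the standard basis of ℝ⁴ with dual basis e*. For λ > 0 define the basis ê λ 0 = e 0 + λ^{-1/2} • e 1, and ê λ i = λ^{-1/2} • e i for i = 1, 2, 3. Then: (i) ê λ is a basis of ℝ⁴ for every λ > 0; (ii) (ê λ)* 0 = e* 0 for all λ, so (ê λ)* 0 → e* 0 as λ → 0⁺ (the first cotetrad condition holds); (iii) √λ • ê λ i = e i for all λ and i = 1, 2, 3 (the spacelike tetrad conditions hold); but (iv) ê λ 0 does not converge as λ → 0⁺, and (v) (ê λ)* 1 = −e* 0 + √λ • e* 1, so λ^{-1/2} • (ê λ)* 1 does not converge as λ → 0⁺. Hence the mixed combination of the first cotetrad condition with the spacelike tetrad conditions is strictly weaker than the full set of tetrad-and-cotetrad convergence conditions. -/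

import Mathlib

noncomputable section

open Filter Topology

/-- ℝ⁴, modelled as `Fin 4 → ℝ`. -/
abbrev E4 : Type := Fin 4 → ℝ

/-- `bs` is the dual basis of the basis `b` of ℝ⁴. -/
def IsDualBasis (b bs : Fin 4 → E4) : Prop :=
  ∀ i j : Fin 4, (∑ a, bs i a * b j a) = if i = j then 1 else 0

/-- with `e` the standard basis of ℝ⁴, the family
`ê λ 0 = e 0 + λ^{-1/2} • e 1`, `ê λ i = λ^{-1/2} • e i` (i = 1,2,3) is a basis for every
λ > 0 which satisfies the first cotetrad condition (`(ê λ)* 0 = e* 0` is constant) and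
the spacelike tetrad conditions (`√λ • ê λ i = e i`), yet `ê λ 0` does not converge and
`λ^{-1/2} • (ê λ)* 1` does not converge as λ → 0⁺: the mixed combination of convergence
conditions is strictly weaker than the full set. -/
theorem stmt11
    (eh ehs : ℝ → Fin 4 → E4)
    (heh0 : ∀ l : ℝ, eh l 0 = (Pi.single 0 1 : E4) + (Real.sqrt l)⁻¹ • (Pi.single 1 1 : E4))
    (hehi : ∀ l : ℝ, ∀ i : Fin 4, i ≠ 0 → eh l i = (Real.sqrt l)⁻¹ • (Pi.single i 1 : E4))
    (hdual : ∀ l : ℝ, 0 < l → IsDualBasis (eh l) (ehs l)) :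
    -- (i) ê λ is a basis of ℝ⁴ for every λ > 0
    (∀ l : ℝ, 0 < l → LinearIndependent ℝ (eh l)) ∧
    -- (ii) (ê λ)* 0 = e* 0 for all λ > 0, so it converges to e* 0
    (∀ l : ℝ, 0 < l → ehs l 0 = Pi.single 0 1) ∧
    (Tendsto (fun l : ℝ => ehs l 0) (nhdsWithin 0 (Set.Ioi 0))
      (nhds (Pi.single 0 1 : E4))) ∧
    -- (iii) √λ • ê λ i = e i for all λ > 0 and i = 1,2,3, so it converges to e i
    (∀ l : ℝ, 0 < l → ∀ i : Fin 4, i ≠ 0 →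
      Real.sqrt l • eh l i = (Pi.single i 1 : E4)) ∧
    (∀ i : Fin 4, i ≠ 0 →
      Tendsto (fun l : ℝ => Real.sqrt l • eh l i) (nhdsWithin 0 (Set.Ioi 0))
        (nhds (Pi.single i 1 : E4))) ∧
    -- (iv) ê λ 0 does not converge as λ → 0⁺
    (¬ ∃ v : E4, Tendsto (fun l : ℝ => eh l 0) (nhdsWithin 0 (Set.Ioi 0)) (nhds v)) ∧
    -- (v) (ê λ)* 1 = −e* 0 + √λ • e* 1, and λ^{-1/2} • (ê λ)* 1 does not converge
    (∀ l : ℝ, 0 < l →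
      ehs l 1 = -(Pi.single 0 1 : E4) + Real.sqrt l • (Pi.single 1 1 : E4)) ∧
    (¬ ∃ v : E4, Tendsto (fun l : ℝ => (Real.sqrt l)⁻¹ • ehs l 1)
      (nhdsWithin 0 (Set.Ioi 0)) (nhds v)) := by
  have hdiv : Tendsto (fun l : ℝ => (Real.sqrt l)⁻¹) (nhdsWithin 0 (Set.Ioi 0)) atTop := by
    apply Tendsto.comp tendsto_inv_nhdsGT_zero
    rw [tendsto_nhdsWithin_iff]
    constructor
    · have h : Tendsto Real.sqrt (nhds 0) (nhds (Real.sqrt 0)) := Real.continuous_sqrt.tendsto 0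
      rw [Real.sqrt_zero] at h
      exact h.mono_left nhdsWithin_le_nhds
    · filter_upwards [self_mem_nhdsWithin] with l hl
      exact Real.sqrt_pos.mpr hl
  have hco : ∀ l : ℝ, 0 < l → ∀ i : Fin 4,
      ehs l i 0 + (Real.sqrt l)⁻¹ * ehs l i 1 = (if i = 0 then 1 else 0) ∧
      ∀ j : Fin 4, j ≠ 0 → (Real.sqrt l)⁻¹ * ehs l i j = (if i = j then 1 else 0) := by
    intro l hl i
    constructor
    · rw [← hdual l hl i 0, heh0]
      simp [Fin.sum_univ_four]
      ring
    · intro j hj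
      rw [← hdual l hl i j, hehi l j hj]
      simp [Pi.single_apply]
      ring
  have h2 : ∀ l : ℝ, 0 < l → ehs l 0 = Pi.single 0 1 := by
    intro l hl
    have hs : Real.sqrt l ≠ 0 := (Real.sqrt_pos.mpr hl).ne'
    obtain ⟨h0, hj⟩ := hco l hl 0
    have a1 := hj 1 (by decide)
    have a2 := hj 2 (by decide)
    have a3 := hj 3 (by decide)
    rw [a1] at h0
    simp [hs] at h0 a1 a2 a3
    funext k
    fin_cases k <;> simp [h0, a1, a2, a3]
  have h3 : ∀ l : ℝ, 0 < l → ∀ i : Fin 4, i ≠ 0 →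
      Real.sqrt l • eh l i = (Pi.single i 1 : E4) := by
    intro l hl i hi
    have hs : Real.sqrt l ≠ 0 := (Real.sqrt_pos.mpr hl).ne'
    rw [hehi l i hi, smul_smul, mul_inv_cancel₀ hs, one_smul]
  have h5 : ∀ l : ℝ, 0 < l →
      ehs l 1 = -(Pi.single 0 1 : E4) + Real.sqrt l • (Pi.single 1 1 : E4) := by
    intro l hl
    have hs : Real.sqrt l ≠ 0 := (Real.sqrt_pos.mpr hl).ne'
    obtain ⟨h0, hj⟩ := hco l hl 1
    have a1 := hj 1 (by decide)
    have a2 := hj 2 (by decide)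
    have a3 := hj 3 (by decide)
    rw [a1] at h0
    have b1 : ehs l 1 1 = Real.sqrt l := by
      rw [if_pos rfl] at a1
      field_simp at a1
      exact a1
    simp [hs] at h0 a2 a3
    have b0 : ehs l 1 0 = -1 := by linarith
    funext k
    fin_cases k <;> simp [b0, b1, a2, a3]
  refine ⟨?_, h2, ?_, h3, ?_, ?_, h5, ?_⟩
  · intro l hl
    rw [Fintype.linearIndependent_iff]
    intro g hg i
    have h : ∑ a, ehs l i a * (∑ j, g j • eh l j) a = 0 := by
      rw [hg]
      simp
    have h' : ∑ a, ehs l i a * (∑ j, g j • eh l j) a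
        = ∑ j, g j * ∑ a, ehs l i a * eh l j a := by
      simp only [Finset.sum_apply, Pi.smul_apply, smul_eq_mul, Finset.mul_sum]
      rw [Finset.sum_comm]
      refine Finset.sum_congr rfl fun j _ => Finset.sum_congr rfl fun a _ => ?_
      ring
    rw [h'] at h
    simp only [hdual l hl i _] at h
    simpa using h
  · refine tendsto_const_nhds.congr' ?_
    filter_upwards [self_mem_nhdsWithin] with l hl
    exact (h2 l hl).symm
  · intro i hi
    refine tendsto_const_nhds.congr' ?_
    filter_upwards [self_mem_nhdsWithin] with l hl
    exact (h3 l hl i hi).symm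
  · rintro ⟨v, hv⟩
    have h := (tendsto_pi_nhds.mp hv) 1
    refine not_tendsto_nhds_of_tendsto_atTop hdiv (v 1) (h.congr fun l => ?_)
    simp [heh0]
  · rintro ⟨v, hv⟩
    have h := ((tendsto_pi_nhds.mp hv) 0).neg
    refine not_tendsto_nhds_of_tendsto_atTop hdiv (-v 0) (h.congr' ?_)
    filter_upwards [self_mem_nhdsWithin] with l hl
    simp [h5 l hl]
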